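/- arXiv:2010.08922 — 2 statements merged into one kernel-verified Lean document; each statement's English description precedes it below -/
import Mathlib

section
/- Let M be a symmetric (n−1)×(n−1) matrix with ±1 entries, let A,B ⊆ {1,…,n−1} with |A| = |B| be such that M[A,B] is λ-heavy for some λ > 0, and let I ⊆ {1,…,n−1} \ B be nonempty. Form a random symmetric n×n matrix M_n by appending to M a new row and column whose entries are independent Rademacher random variables. Then with probability at least 1 − 2^{−|I|} there exists i ∈ I such that M_n[A ∪ {n}, B ∪ {i}] is λ-heavy. -/
/-!
The permanent of `M_n[A ∪ {n}, B ∪ {i}]` is affine in the new entry `x_i = M_n(n, i)`, with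
leading coefficient `per M[A,B]`, and its constant term involves only the new entries `x_j` with
`j ∈ B`. Hence, if two outcomes agree on the columns of `B` and differ in `x_i`, the two permanents
differ by `2 |per M[A,B]| ≥ 2λ` (`permOn_sub_permOn`), so they cannot both be below `λ` in absolute
value.

Call an outcome bad if no `i ∈ I` works. Flipping the entries `x_i`, `i ∈ T`, for the various
`T ⊆ I` moves the bad set to `2^|I|` translates. Since `I` is disjoint from `B`, the affine
structure makes these pairwise disjoint, so the bad set has density at most `2^(-|I|)`
(`card_bad_mul_le`).
-/

open Finset

/-- The real number (`1` or `-1`) associated to a Boolean: a Rademacher value. -/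
noncomputable def rad (b : Bool) : ℝ := if b then 1 else -1

/-- The permanent of the submatrix of `M` with row set `A` and column set `B`,
defined as a sum over all bijections between `A` and `B` (it equals `0` if
`A.card ≠ B.card`). Since the permanent is invariant under row and column
permutations, this faithfully represents `per M[A,B]`. -/
noncomputable def permOn {m n : ℕ} (M : Matrix (Fin m) (Fin n) ℝ)
    (A : Finset (Fin m)) (B : Finset (Fin n)) : ℝ :=
  ∑ σ : {x // x ∈ A} ≃ {y // y ∈ B}, ∏ i : {x // x ∈ A}, M i.1 (σ i).1

/-- The random symmetric extension of a fixed `n' × n'` matrix `M` to an `n × n` matrix: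
the top-left `n' × n'` block is `M`, and the remaining entries are Rademacher values
determined symmetrically by the Boolean data `ω`. As `ω` ranges uniformly over all Boolean
data, the new entries (on and above the diagonal) are i.i.d. Rademacher random variables. -/
noncomputable def extSym {n' : ℕ} (n : ℕ) (M : Matrix (Fin n') (Fin n') ℝ)
    (ω : Fin n → Fin n → Bool) : Matrix (Fin n) (Fin n) ℝ :=
  fun i j =>
    if h : (i : ℕ) < n' ∧ (j : ℕ) < n' then M ⟨i, h.1⟩ ⟨j, h.2⟩
    else if i ≤ j then rad (ω i j) else rad (ω j i)

open Classical in
/-- The probability of the event `P` for the random symmetric extension of `M` to size `n`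
(i.e. conditionally on the outcome `M` for the top-left block). -/
noncomputable def probExt {n' : ℕ} (n : ℕ) (M : Matrix (Fin n') (Fin n') ℝ)
    (P : Matrix (Fin n) (Fin n) ℝ → Prop) : ℝ :=
  ((univ.filter fun ω : Fin n → Fin n → Bool => P (extSym n M ω)).card : ℝ) / 2 ^ (n * n)

/-- The permanent computed along arbitrary enumerations of the row and column sets. -/
lemma permOn_eq_sum {m n : ℕ} (N : Matrix (Fin m) (Fin n) ℝ) (A : Finset (Fin m))
    (B : Finset (Fin n)) {α β : Type*} [Fintype α] [Fintype β] [DecidableEq α] [DecidableEq β]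
    (e : α ≃ {x // x ∈ A}) (f : β ≃ {y // y ∈ B}) :
    permOn N A B = ∑ τ : α ≃ β, ∏ x : α, N (e x).1 (f (τ x)).1 := by
  unfold permOn
  refine Fintype.sum_equiv (Equiv.equivCongr e.symm f.symm) _ _ fun σ => ?_
  refine Fintype.prod_equiv e.symm _ _ fun i => ?_
  simp [Equiv.equivCongr]

/-- A sum over bijections `Option α ≃ Option β` supported on those fixing `none` is a sum over
bijections `α ≃ β`. -/
lemma sum_option_equiv {α β : Type*} [Fintype α] [Fintype β] [DecidableEq α] [DecidableEq β]
    (G : (Option α ≃ Option β) → ℝ) (hG : ∀ σ, σ none ≠ none → G σ = 0) :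
    ∑ σ, G σ = ∑ τ : α ≃ β, G (Equiv.optionCongr τ) := by
  symm
  apply Finset.sum_of_injOn (fun τ => Equiv.optionCongr τ)
  · exact fun a _ b _ h => Equiv.optionCongr_injective h
  · simp
  · intro σ _ hσ
    apply hG
    intro h0
    apply hσ
    refine ⟨Equiv.removeNone σ, by simp, ?_⟩
    ext1 x
    cases x with
    | none => simp [h0]
    | some x =>
      have hx : σ (some x) ≠ none := by
        rw [← h0]; simp
      obtain ⟨y, hy⟩ := Option.ne_none_iff_exists'.mp hx
      simp [Equiv.removeNone_some σ ⟨y, hy⟩]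
  · simp

/-- Enumeration of `A ∪ {a}` by `Option A`, where `none` goes to the new element `a`. -/
noncomputable def insertEquiv {n : ℕ} (A : Finset (Fin n)) (a : Fin (n + 1))
    (ha : a ∉ A.map Fin.castSuccEmb) :
    Option {x // x ∈ A} ≃ {y // y ∈ insert a (A.map Fin.castSuccEmb)} :=
  (Equiv.optionCongr (A.equivMap Fin.castSuccEmb)).trans
    (Finset.subtypeInsertEquivOption ha).symm

lemma insertEquiv_none {n : ℕ} (A : Finset (Fin n)) (a : Fin (n + 1))
    (ha : a ∉ A.map Fin.castSuccEmb) : (insertEquiv A a ha none).1 = a := by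
  simp [insertEquiv, Finset.subtypeInsertEquivOption]

lemma insertEquiv_some {n : ℕ} (A : Finset (Fin n)) (a : Fin (n + 1))
    (ha : a ∉ A.map Fin.castSuccEmb) (x : {x // x ∈ A}) :
    (insertEquiv A a ha (some x)).1 = Fin.castSucc x.1 := by
  simp [Finset.equivMap, insertEquiv, Finset.subtypeInsertEquivOption]

/-- Two extensions of `M` whose last rows agree on the columns of `B` have augmented permanents
differing by the change of the last-row entry in column `i` times `per M[A,B]`: in the expansions
over bijections, the terms that do not send the new row to column `i` cancel. -/
lemma permOn_sub_permOn {n : ℕ} (M : Matrix (Fin n) (Fin n) ℝ)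
    (N N' : Matrix (Fin (n + 1)) (Fin (n + 1)) ℝ)
    (A B : Finset (Fin n)) (i : Fin n) (hi : i ∉ B)
    (hN : ∀ x y, N (Fin.castSucc x) (Fin.castSucc y) = M x y)
    (hN' : ∀ x y, N' (Fin.castSucc x) (Fin.castSucc y) = M x y)
    (hB : ∀ b ∈ B, N (Fin.last n) (Fin.castSucc b) = N' (Fin.last n) (Fin.castSucc b)) :
    permOn N (insert (Fin.last n) (A.map Fin.castSuccEmb))
          (insert (Fin.castSucc i) (B.map Fin.castSuccEmb)) -
      permOn N' (insert (Fin.last n) (A.map Fin.castSuccEmb))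
          (insert (Fin.castSucc i) (B.map Fin.castSuccEmb)) =
      (N (Fin.last n) (Fin.castSucc i) - N' (Fin.last n) (Fin.castSucc i)) * permOn M A B := by
  have ha : Fin.last n ∉ A.map Fin.castSuccEmb := by
    simp [Fin.castSucc_ne_last]
  have hb : Fin.castSucc i ∉ B.map Fin.castSuccEmb := by
    simpa using hi
  rw [permOn_eq_sum N _ _ (insertEquiv A _ ha) (insertEquiv B _ hb),
    permOn_eq_sum N' _ _ (insertEquiv A _ ha) (insertEquiv B _ hb), ← Finset.sum_sub_distrib,
    sum_option_equiv]
  · simp only [permOn, Finset.mul_sum]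
    refine Finset.sum_congr rfl fun τ _ => ?_
    simp [Fintype.prod_option, insertEquiv_none, insertEquiv_some, hN, hN', sub_mul]
  · intro σ hσ
    rw [sub_eq_zero]
    refine Finset.prod_congr rfl fun x _ => ?_
    cases x with
    | none =>
      obtain ⟨y, hy⟩ := Option.ne_none_iff_exists'.mp hσ
      rw [hy, insertEquiv_none, insertEquiv_some]
      exact hB _ y.2
    | some x =>
      -- column `i` is an old column too, so the rows of `A` are never affected
      rw [insertEquiv_some]
      rcases σ (some x) with _ | y
      · rw [insertEquiv_none, hN, hN']
      · rw [insertEquiv_some, hN, hN']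

lemma extSym_castSucc {n : ℕ} (M : Matrix (Fin n) (Fin n) ℝ)
    (ω : Fin (n + 1) → Fin (n + 1) → Bool) (x y : Fin n) :
    extSym (n + 1) M ω (Fin.castSucc x) (Fin.castSucc y) = M x y := by
  simp [extSym]

lemma extSym_last {n : ℕ} (M : Matrix (Fin n) (Fin n) ℝ)
    (ω : Fin (n + 1) → Fin (n + 1) → Bool) (y : Fin n) :
    extSym (n + 1) M ω (Fin.last n) (Fin.castSucc y) =
      rad (ω (Fin.castSucc y) (Fin.last n)) := by
  have h : ¬ Fin.last n ≤ Fin.castSucc y := not_le.mpr (Fin.castSucc_lt_last y)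
  simp [extSym, h]

/-- Flips the data of the new entries in the columns of `T` (read off from the last column of
`ω`, where `extSym` stores them). -/
def flipOn {n : ℕ} (ω : Fin (n + 1) → Fin (n + 1) → Bool) (T : Finset (Fin n)) :
    Fin (n + 1) → Fin (n + 1) → Bool :=
  fun a b => xor (ω a b) (decide (b = Fin.last n ∧ a ∈ T.map Fin.castSuccEmb))

lemma flipOn_last {n : ℕ} (ω : Fin (n + 1) → Fin (n + 1) → Bool) (T : Finset (Fin n))
    (y : Fin n) : flipOn ω T (Fin.castSucc y) (Fin.last n) =
      xor (ω (Fin.castSucc y) (Fin.last n)) (decide (y ∈ T)) := by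
  simp [flipOn]

/-- If no two members of `S` agree on the new entries in `B` and differ on one in `I`, then the
`2^|I|` translates of `S` by flips on subsets of `I` are disjoint. -/
lemma card_bad_mul_le {n : ℕ} (I B : Finset (Fin n)) (hIB : Disjoint I B)
    (S : Finset (Fin (n + 1) → Fin (n + 1) → Bool))
    (hS : ∀ ω ∈ S, ∀ ω' ∈ S,
      (∀ b ∈ B, ω (Fin.castSucc b) (Fin.last n) = ω' (Fin.castSucc b) (Fin.last n)) →
      ∀ i ∈ I, ω (Fin.castSucc i) (Fin.last n) = ω' (Fin.castSucc i) (Fin.last n)) :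
    S.card * 2 ^ I.card ≤ 2 ^ ((n + 1) * (n + 1)) := by
  have h := Finset.card_le_card_of_injOn (s := S ×ˢ I.powerset)
    (t := (univ : Finset (Fin (n + 1) → Fin (n + 1) → Bool)))
    (fun p => flipOn p.1 p.2) (by simp) ?_
  · simpa [Finset.card_product, Finset.card_powerset, ← pow_mul] using h
  · rintro ⟨ω, T⟩ h1 ⟨ω', T'⟩ h2 heq
    simp only [Finset.coe_product, Set.mem_prod, Finset.mem_coe, Finset.mem_powerset] at h1 h2
    have hlast : ∀ y : Fin n, xor (ω (Fin.castSucc y) (Fin.last n)) (decide (y ∈ T)) =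
        xor (ω' (Fin.castSucc y) (Fin.last n)) (decide (y ∈ T')) := by
      intro y
      rw [← flipOn_last, ← flipOn_last]
      exact congrFun (congrFun heq _) _
    have hagree := hS ω h1.1 ω' h2.1 (by
      intro b hb
      have hbI : b ∉ I := fun h => Finset.disjoint_left.mp hIB h hb
      have := hlast b
      rwa [decide_eq_false (fun h => hbI (h1.2 h)), decide_eq_false (fun h => hbI (h2.2 h)),
        Bool.xor_false, Bool.xor_false] at this)
    have hT : T = T' := by
      ext y
      by_cases hy : y ∈ I
      · have := hlast y
        rw [hagree y hy] at this
        simpa using this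
      · exact iff_of_false (fun h => hy (h1.2 h)) (fun h => hy (h2.2 h))
    subst hT
    simp only [Prod.mk.injEq, and_true]
    funext a b
    have := congrFun (congrFun heq a) b
    simpa [flipOn] using this

/-- Growing a heavy submatrix by one row and one column: if `M[A,B]` is `λ`-heavy
(`|A| = |B|`) and `I` is a nonempty set of column indices disjoint from `B`, then after
appending a random symmetric row and column to the symmetric `±1` matrix `M`, with
probability at least `1 - 2^(-|I|)` there is some `i ∈ I` such that
`M_n[A ∪ {n}, B ∪ {i}]` is `λ`-heavy. -/
theorem simple_augment (n : ℕ) (M : Matrix (Fin n) (Fin n) ℝ) (hsym : M.IsSymm)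
    (hsign : ∀ i j, M i j = 1 ∨ M i j = -1)
    (A B : Finset (Fin n)) (hAB : A.card = B.card) (lam : ℝ) (hlam : 0 < lam)
    (hheavy : lam ≤ |permOn M A B|)
    (I : Finset (Fin n)) (hI : I.Nonempty) (hIB : Disjoint I B) :
    1 - (1 / 2 : ℝ) ^ I.card ≤
      probExt (n + 1) M fun M' => ∃ i ∈ I,
        lam ≤ |permOn M'
          (insert (Fin.last n) (A.map Fin.castSuccEmb))
          (insert (Fin.castSucc i) (B.map Fin.castSuccEmb))| := by
  classical
  set P : Matrix (Fin (n + 1)) (Fin (n + 1)) ℝ → Prop := fun M' => ∃ i ∈ I,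
        lam ≤ |permOn M'
          (insert (Fin.last n) (A.map Fin.castSuccEmb))
          (insert (Fin.castSucc i) (B.map Fin.castSuccEmb))| with hP
  have hbad := card_bad_mul_le I B hIB
    (univ.filter fun ω => ¬ P (extSym (n + 1) M ω)) (by
      intro ω hω ω' hω' hB i hi
      by_contra hne
      simp only [hP, Finset.mem_filter, Finset.mem_univ, true_and, not_exists, not_and,
        not_le] at hω hω'
      have h1 := abs_lt.mp (hω i hi)
      have h2 := abs_lt.mp (hω' i hi)
      have hd := permOn_sub_permOn M (extSym (n + 1) M ω) (extSym (n + 1) M ω') A B i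
        (Finset.disjoint_left.mp hIB hi) (extSym_castSucc M ω) (extSym_castSucc M ω')
        (fun b hb => by rw [extSym_last, extSym_last, hB b hb])
      rw [extSym_last, extSym_last] at hd
      have hr : rad (ω (Fin.castSucc i) (Fin.last n)) -
          rad (ω' (Fin.castSucc i) (Fin.last n)) = 2 ∨
          rad (ω (Fin.castSucc i) (Fin.last n)) -
          rad (ω' (Fin.castSucc i) (Fin.last n)) = -2 := by
        revert hne
        generalize ω (Fin.castSucc i) (Fin.last n) = u
        generalize ω' (Fin.castSucc i) (Fin.last n) = v
        cases u <;> cases v <;> norm_num [rad]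
      rcases hr with hr | hr <;> rw [hr] at hd <;>
        rcases le_abs.mp hheavy with h | h <;> linarith [h1.1, h1.2, h2.1, h2.2])
  have htot : (univ.filter fun ω => P (extSym (n + 1) M ω)).card +
      (univ.filter fun ω => ¬ P (extSym (n + 1) M ω)).card = 2 ^ ((n + 1) * (n + 1)) := by
    rw [Finset.card_filter_add_card_filter_not]
    simp [← pow_mul]
  have hbad' : ((univ.filter fun ω => ¬ P (extSym (n + 1) M ω)).card : ℝ) * 2 ^ I.card ≤
      2 ^ ((n + 1) * (n + 1)) := by exact_mod_cast hbad
  have htot' : ((univ.filter fun ω => P (extSym (n + 1) M ω)).card : ℝ) +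
      ((univ.filter fun ω => ¬ P (extSym (n + 1) M ω)).card : ℝ) =
      2 ^ ((n + 1) * (n + 1)) := by exact_mod_cast htot
  have hgood : ((univ.filter fun ω => P (extSym (n + 1) M ω)).card : ℝ) =
      2 ^ ((n + 1) * (n + 1)) -
        ((univ.filter fun ω => ¬ P (extSym (n + 1) M ω)).card : ℝ) := by linarith
  have hgoal : probExt (n + 1) M P =
      ((univ.filter fun ω => P (extSym (n + 1) M ω)).card : ℝ) / 2 ^ ((n + 1) * (n + 1)) := by
    unfold probExt
    congr!
  rw [hgoal, hgood, le_div_iff₀ (by positivity), sub_mul, one_mul, one_div, inv_pow]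
  apply sub_le_sub_left
  rw [inv_mul_eq_div, le_div_iff₀ (by positivity)]
  exact hbad'
end

section
/- Let M be a symmetric (n−1)×(n−1) matrix with ±1 entries, and let A,B ⊆ {1,…,n−1} with |A| = |B| be such that M[A,B] is λ-heavy for some λ > 0. Form a random symmetric n×n matrix M_n by appending to M a new row and column whose entries are independent Rademacher random variables. Then for any a ∈ B \ A and any distinct b_1, b_2 ∈ A \ B, one can choose distinct i, j ∈ {a, b_1, b_2} such that with probability at least 1/4 the submatrix M_n[A ∪ {a, n}, (B \ {a}) ∪ {i, j, n}] is (λ/2)-heavy. -/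
/-!
Write `S = A ∪ {a}`, `C = B \ {a}` and `w k = per M[S \ {k}, C ∪ {k}]`. Expanding the permanent of
`M_n[S ∪ {n}, C ∪ {i, j, n}]` along its last row and its last column (`permOn_bordered`) shows that
it is a quadratic polynomial in the new entries `x_k`, plus `x_n` times a constant. Only the terms
`x_i x_j` and `x_j x_i` survive the alternating sum over the four sign changes of `x_i` and `x_j`
(`second_difference`), and they contribute `4 x_i x_j (w i + w j)`. Hence among any four outcomes
which differ by these sign changes, at least one has absolute value at least `|w i + w j|`, and so
the permanent is `|w i + w j|`-heavy with probability at least `1/4` (`heavy_of_coeff`).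

It remains to choose the pair. Since `w a = per M[A, B]` and
`(w a + w b₁) + (w a + w b₂) - (w b₁ + w b₂) = 2 w a`, one of the three sums has absolute value at
least `2λ/3`, which is more than `λ/2`.
-/

open Finset

/-! ### Laplace expansion -/

/-- The permanent of a matrix indexed by arbitrary finite types, as a sum over bijections between
the row and column types. -/
noncomputable def typePerm {α β : Type} [Fintype α] [Fintype β] [DecidableEq α] [DecidableEq β]
    (f : α → β → ℝ) : ℝ :=
  ∑ e : α ≃ β, ∏ x, f x (e x)

theorem typePerm_reindex {α β γ δ : Type} [Fintype α] [Fintype β] [DecidableEq α] [DecidableEq β]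
    [Fintype γ] [Fintype δ] [DecidableEq γ] [DecidableEq δ]
    (u : α ≃ γ) (v : β ≃ δ) (f : α → β → ℝ) (g : γ → δ → ℝ)
    (h : ∀ x y, f x y = g (u x) (v y)) : typePerm f = typePerm g := by
  unfold typePerm
  refine Fintype.sum_equiv (Equiv.equivCongr u v) _ _ fun e => ?_
  refine Fintype.prod_equiv u _ _ fun x => ?_
  simp [h, Equiv.equivCongr]

/-- Laplace expansion along the row `none`. -/
theorem typePerm_option {α β : Type} [Fintype α] [Fintype β] [DecidableEq α] [DecidableEq β]
    (f : Option α → β → ℝ) :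
    typePerm f = ∑ b, f none b * typePerm (fun (x : α) (y : {y // y ≠ b}) => f (some x) y) := by
  unfold typePerm
  rw [← Finset.sum_fiberwise (s := univ) (g := fun e : Option α ≃ β => e none)]
  refine Finset.sum_congr rfl fun b _ => ?_
  rw [Finset.mul_sum, Finset.sum_subtype (p := fun e : Option α ≃ β => e none = b) _ (by simp)]
  refine Fintype.sum_equiv (Equiv.optionSubtype b) _ _ fun e => ?_
  rw [Fintype.prod_option, e.2]
  rfl

/-- Laplace expansion of `per M[A ∪ {r}, B]` along the row `r`. -/
theorem permOn_insert_row {m n : ℕ} (M : Matrix (Fin m) (Fin n) ℝ)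
    (A : Finset (Fin m)) (B : Finset (Fin n)) (r : Fin m) (hr : r ∉ A) :
    permOn M (insert r A) B = ∑ c ∈ B, M r c * permOn M A (B.erase c) := by
  have h1 : permOn M (insert r A) B =
      typePerm (fun (x : Option {x // x ∈ A}) (y : {y // y ∈ B}) =>
        M (((Finset.subtypeInsertEquivOption hr).symm x).1) y.1) :=
    typePerm_reindex (f := fun (x : {x // x ∈ insert r A}) (y : {y // y ∈ B}) => M x.1 y.1)
      (Finset.subtypeInsertEquivOption hr) (Equiv.refl _) _ (by simp)
  rw [h1, typePerm_option, ← Finset.sum_coe_sort B]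
  refine Finset.sum_congr rfl fun c _ => ?_
  congr 1
  refine typePerm_reindex (g := fun (x : {x // x ∈ A}) (y : {y // y ∈ B.erase c.1}) => M x.1 y.1)
    (Equiv.refl _)
    { toFun := fun y => ⟨y.1.1, Finset.mem_erase.2 ⟨fun h => y.2 (Subtype.ext h), y.1.2⟩⟩
      invFun := fun y => ⟨⟨y.1, Finset.mem_of_mem_erase y.2⟩,
        fun h => Finset.ne_of_mem_erase y.2 (congrArg Subtype.val h)⟩
      left_inv := fun y => rfl
      right_inv := fun y => rfl } _ fun x y => rfl

theorem permOn_transpose {m n : ℕ} (M : Matrix (Fin m) (Fin n) ℝ)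
    (A : Finset (Fin m)) (B : Finset (Fin n)) : permOn M.transpose B A = permOn M A B := by
  unfold permOn
  refine Fintype.sum_equiv ⟨Equiv.symm, Equiv.symm, fun _ => rfl, fun _ => rfl⟩ _ _ fun e => ?_
  refine Fintype.prod_equiv e _ _ fun x => ?_
  simp

theorem permOn_insert_col {m n : ℕ} (M : Matrix (Fin m) (Fin n) ℝ)
    (A : Finset (Fin m)) (B : Finset (Fin n)) (c : Fin n) (hc : c ∉ B) :
    permOn M A (insert c B) = ∑ r ∈ A, M r c * permOn M (A.erase r) B := by
  rw [← permOn_transpose, permOn_insert_row _ _ _ _ hc]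
  simp only [permOn_transpose, Matrix.transpose_apply]

/-- The bijection between a finite set and its image under `Fin.castSucc`. -/
noncomputable def castSuccEquiv {n : ℕ} (A : Finset (Fin n)) :
    {x // x ∈ A} ≃ {y // y ∈ A.map Fin.castSuccEmb} :=
  Equiv.ofBijective (fun x => ⟨x.1.castSucc, Finset.mem_map_of_mem Fin.castSuccEmb x.2⟩) <| by
    constructor
    · intro x y hxy
      exact Subtype.ext (Fin.castSucc_injective n (congrArg Subtype.val hxy))
    · rintro ⟨y, hy⟩
      obtain ⟨x, hx, rfl⟩ := Finset.mem_map.1 hy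
      exact ⟨⟨x, hx⟩, rfl⟩

theorem permOn_map {n : ℕ} (M : Matrix (Fin n) (Fin n) ℝ)
    (M' : Matrix (Fin (n + 1)) (Fin (n + 1)) ℝ)
    (h : ∀ r c : Fin n, M' r.castSucc c.castSucc = M r c) (A B : Finset (Fin n)) :
    permOn M' (A.map Fin.castSuccEmb) (B.map Fin.castSuccEmb) = permOn M A B := by
  symm
  refine typePerm_reindex (f := fun (x : {x // x ∈ A}) (y : {y // y ∈ B}) => M x.1 y.1)
    (g := fun (x : {x // x ∈ A.map Fin.castSuccEmb}) (y : {y // y ∈ B.map Fin.castSuccEmb}) =>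
      M' x.1 y.1)
    (castSuccEquiv A) (castSuccEquiv B) fun x y => ?_
  exact (h x.1 y.1).symm

/-- The permanent of a symmetrically bordered matrix as a quadratic polynomial in the border. -/
theorem permOn_bordered {n : ℕ} (M : Matrix (Fin n) (Fin n) ℝ)
    (M' : Matrix (Fin (n + 1)) (Fin (n + 1)) ℝ) (x : Fin n → ℝ)
    (h : ∀ r c : Fin n, M' r.castSucc c.castSucc = M r c)
    (hrow : ∀ c : Fin n, M' (Fin.last n) c.castSucc = x c)
    (hcol : ∀ r : Fin n, M' r.castSucc (Fin.last n) = x r) (S T : Finset (Fin n)) :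
    permOn M' (insert (Fin.last n) (S.map Fin.castSuccEmb))
        (insert (Fin.last n) (T.map Fin.castSuccEmb)) =
      M' (Fin.last n) (Fin.last n) * permOn M S T +
        ∑ c ∈ T, ∑ r ∈ S, x c * x r * permOn M (S.erase r) (T.erase c) := by
  have hl : ∀ U : Finset (Fin n), Fin.last n ∉ U.map Fin.castSuccEmb := by
    intro U; simp [Fin.castSucc_ne_last]
  rw [permOn_insert_row _ _ _ _ (hl S), Finset.sum_insert (hl T), Finset.erase_insert (hl T),
    permOn_map M M' h, Finset.sum_map]
  congr 1
  refine Finset.sum_congr rfl fun c _ => ?_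
  have he : (insert (Fin.last n) (T.map Fin.castSuccEmb)).erase (Fin.castSuccEmb c) =
      insert (Fin.last n) ((T.erase c).map Fin.castSuccEmb) := by
    rw [Finset.map_erase, Finset.erase_insert_of_ne]
    exact (Fin.castSucc_ne_last c).symm
  rw [he, permOn_insert_col _ _ _ _ (hl _), Finset.sum_map, Finset.mul_sum]
  refine Finset.sum_congr rfl fun r _ => ?_
  rw [← Finset.map_erase, permOn_map M M' h]
  simp only [Fin.coe_castSuccEmb, hrow, hcol]
  ring

/-! ### Sign changes of two new entries -/

/-- The vector `x` with its `i`-th entry scaled by `u` and its `j`-th entry scaled by `v`. -/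
def scaleTwo {n : ℕ} (i j : Fin n) (u v : ℝ) (x : Fin n → ℝ) : Fin n → ℝ :=
  fun k => if k = i then u * x k else if k = j then v * x k else x k

/-- The alternating sum over the sign changes of `x i` and `x j` annihilates every monomial
`x c * x r` other than `x i * x j`; squares are included, because they do not depend on signs. -/
theorem second_difference {n : ℕ} (i j : Fin n) (hij : i ≠ j) (x : Fin n → ℝ)
    (S T : Finset (Fin n)) (hiS : i ∈ S) (hjS : j ∈ S) (hiT : i ∈ T) (hjT : j ∈ T)
    (p : Fin n → Fin n → ℝ) (Q : (Fin n → ℝ) → ℝ)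
    (hQ : ∀ y, Q y = ∑ c ∈ T, ∑ r ∈ S, y c * y r * p r c) :
    Q (scaleTwo i j 1 1 x) - Q (scaleTwo i j (-1) 1 x) - Q (scaleTwo i j 1 (-1) x)
      + Q (scaleTwo i j (-1) (-1) x) = 4 * (x i * x j) * (p i j + p j i) := by
  have hterm : ∀ c r,
      scaleTwo i j 1 1 x c * scaleTwo i j 1 1 x r * p r c
        - scaleTwo i j (-1) 1 x c * scaleTwo i j (-1) 1 x r * p r c
        - scaleTwo i j 1 (-1) x c * scaleTwo i j 1 (-1) x r * p r c
        + scaleTwo i j (-1) (-1) x c * scaleTwo i j (-1) (-1) x r * p r c =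
      (if c = i then (if r = j then 4 * (x i * x j) * p j i else 0) else 0)
        + (if c = j then (if r = i then 4 * (x i * x j) * p i j else 0) else 0) := by
    intro c r
    unfold scaleTwo
    by_cases h1 : c = i <;> by_cases h2 : c = j <;> by_cases h3 : r = i <;>
      by_cases h4 : r = j <;> simp_all <;> ring
  simp only [hQ, ← Finset.sum_sub_distrib, ← Finset.sum_add_distrib, hterm]
  simp only [Finset.sum_add_distrib]
  rw [Finset.sum_eq_single_of_mem i hiT (by intro b _ hb; simp [hb]),
    Finset.sum_eq_single_of_mem j hjT (by intro b _ hb; simp [hb])]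
  simp only [if_true]
  rw [Finset.sum_ite_eq' S j, Finset.sum_ite_eq' S i, if_pos hiS, if_pos hjS]
  ring

/-- Flip the Boolean datum in position `(k, n)`, that is, the sign of the new entry `x_k`. -/
def flipAt {n : ℕ} (k : Fin n) (ω : Fin (n + 1) → Fin (n + 1) → Bool) :
    Fin (n + 1) → Fin (n + 1) → Bool :=
  fun r c => if r = k.castSucc ∧ c = Fin.last n then !(ω r c) else ω r c

theorem flipAt_flipAt {n : ℕ} (k : Fin n) (ω : Fin (n + 1) → Fin (n + 1) → Bool) :
    flipAt k (flipAt k ω) = ω := by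
  funext r c
  unfold flipAt
  split_ifs <;> simp

theorem rad_not (b : Bool) : rad (!b) = -rad b := by
  cases b <;> simp [rad]

theorem abs_rad (b : Bool) : |rad b| = 1 := by
  cases b <;> simp [rad]

/-- If every orbit `ω, f ω, g ω, f (g ω)` under two involutions meets `P`, then `P` holds for at
least a quarter of all points. -/
theorem card_le_four_mul {Ω : Type} [Fintype Ω] [DecidableEq Ω] (P : Ω → Prop) [DecidablePred P]
    (f g : Ω → Ω) (hf : Function.Involutive f) (hg : Function.Involutive g)
    (h : ∀ ω, P ω ∨ P (f ω) ∨ P (g ω) ∨ P (f (g ω))) :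
    Fintype.card Ω ≤ 4 * (univ.filter P).card := by
  have hcard : ∀ k : Ω → Ω, Function.Injective k →
      (univ.filter fun ω => P (k ω)).card ≤ (univ.filter P).card := fun k hk =>
    Finset.card_le_card_of_injOn k (by intro ω; simp) hk.injOn
  have hsub : (univ : Finset Ω) ⊆ (univ.filter P ∪ univ.filter fun ω => P (f ω)) ∪
      ((univ.filter fun ω => P (g ω)) ∪ univ.filter fun ω => P (f (g ω))) := by
    intro ω _
    have := h ω
    simp only [Finset.mem_union, Finset.mem_filter, Finset.mem_univ, true_and]
    tauto
  have h0 := Finset.card_le_card hsub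
  have h1 := Finset.card_union_le (univ.filter P ∪ univ.filter fun ω => P (f ω))
    ((univ.filter fun ω => P (g ω)) ∪ univ.filter fun ω => P (f (g ω)))
  have h2 := Finset.card_union_le (univ.filter P) (univ.filter fun ω => P (f ω))
  have h3 := Finset.card_union_le (univ.filter fun ω => P (g ω))
    (univ.filter fun ω => P (f (g ω)))
  have h4 := hcard f hf.injective
  have h5 := hcard g hg.injective
  have h6 := hcard (fun ω => f (g ω)) (hf.injective.comp hg.injective)
  rw [Finset.card_univ] at h0
  omega

/-- The coefficient of `x_i x_j` in the bordered permanent controls its heaviness. -/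
theorem heavy_of_coeff {n : ℕ} (M : Matrix (Fin n) (Fin n) ℝ) (S C : Finset (Fin n))
    (i j : Fin n) (hij : i ≠ j) (hiS : i ∈ S) (hjS : j ∈ S) (hiC : i ∉ C) (hjC : j ∉ C) (μ : ℝ)
    (hμ : μ ≤ |permOn M (S.erase i) (insert i C) + permOn M (S.erase j) (insert j C)|) :
    1 / 4 ≤ probExt (n + 1) M fun M' =>
      μ ≤ |permOn M' (insert (Fin.last n) (S.map Fin.castSuccEmb))
        (insert (Fin.last n) ((insert i (insert j C)).map Fin.castSuccEmb))| := by
  classical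
  set T := insert i (insert j C) with hT
  have hTi : T.erase i = insert j C := Finset.erase_insert (by simp [hij, hiC])
  have hTj : T.erase j = insert i C := by
    rw [hT, Finset.insert_comm]
    exact Finset.erase_insert (by simp [hij.symm, hjC])
  set P : (Fin (n + 1) → Fin (n + 1) → Bool) → Prop := fun ω =>
    μ ≤ |permOn (extSym (n + 1) M ω) (insert (Fin.last n) (S.map Fin.castSuccEmb))
        (insert (Fin.last n) (T.map Fin.castSuccEmb))| with hP
  set Q : (Fin n → ℝ) → ℝ := fun y =>
    ∑ c ∈ T, ∑ r ∈ S, y c * y r * permOn M (S.erase r) (T.erase c) with hQ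
  -- The new entries `x_k`, with the corner `x_n` left out.
  let X : (Fin (n + 1) → Fin (n + 1) → Bool) → Fin n → ℝ := fun ω k =>
    rad (ω k.castSucc (Fin.last n))
  have hperm : ∀ ω, permOn (extSym (n + 1) M ω) (insert (Fin.last n) (S.map Fin.castSuccEmb))
        (insert (Fin.last n) (T.map Fin.castSuccEmb)) =
      rad (ω (Fin.last n) (Fin.last n)) * permOn M S T + Q (X ω) := by
    intro ω
    rw [permOn_bordered M (extSym (n + 1) M ω) (X ω)]
    · simp [extSym, hQ]
    · intro r c; simp [extSym]
    · intro c; simp [extSym, X, (Fin.castSucc_lt_last c).not_ge]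
    · intro r; simp [extSym, X, (Fin.castSucc_lt_last r).le]
  have hlast : ∀ k ω, flipAt k ω (Fin.last n) (Fin.last n) = ω (Fin.last n) (Fin.last n) := by
    intro k ω
    simp [flipAt, (Fin.castSucc_ne_last k).symm]
  have hX : ∀ k ω l, X (flipAt k ω) l = if l = k then -X ω l else X ω l := by
    intro k ω l
    simp only [X, flipAt, Fin.castSucc_inj, and_true]
    split_ifs
    · exact rad_not _
    · rfl
  have hmain : ∀ ω, P ω ∨ P (flipAt i ω) ∨ P (flipAt j ω) ∨ P (flipAt i (flipAt j ω)) := by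
    intro ω
    have h0 : X ω = scaleTwo i j 1 1 (X ω) := by
      funext k; simp [scaleTwo]
    have h1 : X (flipAt i ω) = scaleTwo i j (-1) 1 (X ω) := by
      funext k; simp [scaleTwo, hX]
    have h2 : X (flipAt j ω) = scaleTwo i j 1 (-1) (X ω) := by
      funext k
      by_cases hk : k = i <;> simp [scaleTwo, hX, hk, hij]
    have h3 : X (flipAt i (flipAt j ω)) = scaleTwo i j (-1) (-1) (X ω) := by
      funext k
      by_cases hk : k = i <;> simp [scaleTwo, hX, hk, hij]
    have hd := second_difference i j hij (X ω) S T hiS hjS (by simp [hT]) (by simp [hT])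
      (fun r c => permOn M (S.erase r) (T.erase c)) Q (fun _ => rfl)
    rw [← h0, ← h1, ← h2, ← h3, hTi, hTj] at hd
    have habs := congrArg abs hd
    rw [abs_mul, abs_mul, abs_mul, abs_rad, abs_rad] at habs
    by_contra! hcon
    simp only [hP, hperm, hlast, not_le] at hcon
    obtain ⟨c0, c1, c2, c3⟩ := hcon
    rw [abs_lt] at c0 c1 c2 c3
    have : |Q (X ω) - Q (X (flipAt i ω)) - Q (X (flipAt j ω)) + Q (X (flipAt i (flipAt j ω)))|
        < 4 * μ := by
      rw [abs_lt]
      constructor <;> linarith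
    rw [habs] at this
    norm_num at this
    linarith
  have hcard := card_le_four_mul P (flipAt i) (flipAt j) (flipAt_flipAt i) (flipAt_flipAt j) hmain
  have htot : Fintype.card (Fin (n + 1) → Fin (n + 1) → Bool) = 2 ^ ((n + 1) * (n + 1)) := by
    simp [pow_mul]
  rw [htot] at hcard
  have hcard' : (2 : ℝ) ^ ((n + 1) * (n + 1)) ≤ 4 * ((univ.filter P).card : ℝ) := by
    exact_mod_cast hcard
  unfold probExt
  rw [div_le_div_iff₀ (by norm_num) (by positivity)]
  change 1 * (2 : ℝ) ^ ((n + 1) * (n + 1)) ≤ ((univ.filter P).card : ℝ) * 4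
  linarith

/-- Growing a heavy submatrix by two rows and columns using the quadratic expansion:
if `M[A,B]` is `λ`-heavy (`|A| = |B|`), `a ∈ B \ A`, and `b₁, b₂ ∈ A \ B` are distinct,
then one can choose distinct `i, j ∈ {a, b₁, b₂}` such that after appending a random
symmetric row and column to the symmetric `±1` matrix `M`, with probability at least `1/4`
the submatrix `M_n[A ∪ {a, n}, (B \ {a}) ∪ {i, j, n}]` is `(λ/2)`-heavy. -/
theorem corner_might_work (n : ℕ) (M : Matrix (Fin n) (Fin n) ℝ) (hsym : M.IsSymm)
    (hsign : ∀ i j, M i j = 1 ∨ M i j = -1)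
    (A B : Finset (Fin n)) (hAB : A.card = B.card) (lam : ℝ) (hlam : 0 < lam)
    (hheavy : lam ≤ |permOn M A B|)
    (a b₁ b₂ : Fin n) (ha : a ∈ B \ A) (hb₁ : b₁ ∈ A \ B) (hb₂ : b₂ ∈ A \ B)
    (hb : b₁ ≠ b₂) :
    ∃ i j : Fin n, i ≠ j ∧ i ∈ ({a, b₁, b₂} : Finset (Fin n)) ∧
      j ∈ ({a, b₁, b₂} : Finset (Fin n)) ∧
      1 / 4 ≤ probExt (n + 1) M fun M' =>
        lam / 2 ≤ |permOn M'
          (insert (Fin.last n) ((insert a A).map Fin.castSuccEmb))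
          (insert (Fin.last n)
            ((insert i (insert j (B.erase a))).map Fin.castSuccEmb))| := by
  rw [Finset.mem_sdiff] at ha hb₁ hb₂
  have hab₁ : a ≠ b₁ := fun h => ha.2 (h ▸ hb₁.1)
  have hab₂ : a ≠ b₂ := fun h => ha.2 (h ▸ hb₂.1)
  have hC₁ : b₁ ∉ B.erase a := fun h => hb₁.2 (Finset.mem_of_mem_erase h)
  have hC₂ : b₂ ∉ B.erase a := fun h => hb₂.2 (Finset.mem_of_mem_erase h)
  have haC : a ∉ B.erase a := Finset.notMem_erase a B
  have haS : a ∈ insert a A := Finset.mem_insert_self a A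
  have hS₁ : b₁ ∈ insert a A := Finset.mem_insert_of_mem hb₁.1
  have hS₂ : b₂ ∈ insert a A := Finset.mem_insert_of_mem hb₂.1
  have key := fun i j hij hi hj hi' hj' =>
    heavy_of_coeff M (insert a A) (B.erase a) i j hij hi hj hi' hj' (lam / 2)
  set w : Fin n → ℝ := fun k => permOn M ((insert a A).erase k) (insert k (B.erase a)) with hw
  have hwa : w a = permOn M A B := by
    simp only [hw]
    rw [Finset.erase_insert ha.2, Finset.insert_erase ha.1]
  rw [← hwa] at hheavy
  by_cases h1 : lam / 2 ≤ |w a + w b₁|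
  · exact ⟨a, b₁, hab₁, by simp, by simp, key a b₁ hab₁ haS hS₁ haC hC₁ h1⟩
  by_cases h2 : lam / 2 ≤ |w a + w b₂|
  · exact ⟨a, b₂, hab₂, by simp, by simp, key a b₂ hab₂ haS hS₂ haC hC₂ h2⟩
  by_cases h3 : lam / 2 ≤ |w b₁ + w b₂|
  · exact ⟨b₁, b₂, hb, by simp, by simp, key b₁ b₂ hb hS₁ hS₂ hC₁ hC₂ h3⟩
  exfalso
  rw [not_le, abs_lt] at h1 h2 h3
  have : |w a| < lam := by
    rw [abs_lt]
    constructor <;> linarith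
  linarith
end
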